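/- Let r > 0, α > 1, γ = (α−1)/r, ω ∈ ℝ, 0 ≤ φ < 1 and τ > 0. Define for real y ≥ 0 and λ > 0 the score s(y, λ) = γλ·(ψ(γλ+y) + ψ(γλ+α) − ψ(γλ+y+α+r) − ψ(γλ)) and the updating function g(y, λ) = exp(ω + φ·log λ + τ·s(y, λ)). Then for every λ ≥ exp((ω − τ(α+r+1))/(1−φ)) and every real y ≥ 0, the partial derivative of g with respect to y satisfies |∂g(y, λ)/∂y| ≤ τ·γ⁻¹·(α+r+1)·exp(τ(2α+r+2)). -/

import Mathlib

noncomputable def digamma (x : ℝ) : ℝ := deriv (fun t => Real.log (Real.Gamma t)) x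

noncomputable def bnbScore (r a lam y : ℝ) : ℝ :=
  ((a - 1) / r) * lam *
    (digamma (((a - 1) / r) * lam + y) + digamma (((a - 1) / r) * lam + a) -
      digamma (((a - 1) / r) * lam + y + a + r) - digamma (((a - 1) / r) * lam))

noncomputable def gasUpdate (r a om ph ta y lam : ℝ) : ℝ :=
  Real.exp (om + ph * Real.log lam + ta * bnbScore r a lam y)

/-!
Convexity of `log Γ` together with `log Γ(x + 1) - log Γ(x) = log x` gives
`log x - x⁻¹ ≤ ψ(x) ≤ log x`. Hence `ψ` is on `(0, ∞)` the pointwise limit of the concave functions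
`x ↦ log (x + n) - ∑ k < n, (x + k)⁻¹`, so `ψ` is concave. The same convexity argument, applied to
`ψ` and `ψ(x + 1) - ψ(x) = x⁻¹`, gives `x⁻¹ ≤ ψ₁(x) ≤ x⁻¹ + (x ^ 2)⁻¹`.

At `x = γλ = ((a - 1) / r) * lam` these bounds yield `s ≤ a + 1` and
`0 ≤ ∂s/∂y ≤ (a + r + 1) / (γλ)`. The lower bound on `λ` says
`ω + φ log λ ≤ log λ + τ (a + r + 1)`, so `g ≤ λ exp (τ (2a + r + 2))`, and the factor `λ` cancels
in `∂g/∂y = g τ ∂s/∂y`.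
-/

open Filter Set Topology

section Convexity

variable {𝕜 E β ι : Type*} [Semiring 𝕜] [PartialOrder 𝕜] [AddCommMonoid E] [SMul 𝕜 E]
  [AddCommMonoid β] [PartialOrder β] {s : Set E}

theorem convexOn_finset_sum [IsOrderedAddMonoid β] [Module 𝕜 β] (hs : Convex 𝕜 s) {t : Finset ι}
    {f : ι → E → β} (hf : ∀ i ∈ t, ConvexOn 𝕜 s (f i)) :
    ConvexOn 𝕜 s fun x => ∑ i ∈ t, f i x := by
  simp only [← Finset.sum_apply]
  exact Finset.sum_induction f (ConvexOn 𝕜 s) (fun _ _ => ConvexOn.add) (convexOn_const 0 hs) hf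

theorem concaveOn_of_tendsto [TopologicalSpace β] [OrderClosedTopology β] [ContinuousAdd β]
    [SMul 𝕜 β] [ContinuousConstSMul 𝕜 β] {l : Filter ι} [l.NeBot] {F : ι → E → β} {f : E → β}
    (hF : ∀ᶠ i in l, ConcaveOn 𝕜 s (F i)) (hlim : ∀ x ∈ s, Tendsto (F · x) l (𝓝 (f x))) :
    ConcaveOn 𝕜 s f := by
  obtain ⟨i, hi⟩ := hF.exists
  refine ⟨hi.1, fun x hx y hy a b ha hb hab => ?_⟩
  refine le_of_tendsto_of_tendsto
    (((hlim x hx).const_smul a).add ((hlim y hy).const_smul b))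
    (hlim _ (hi.1 hx hy ha hb hab)) ?_
  filter_upwards [hF] with i hi using hi.2 hx hy ha hb hab

end Convexity

section Digamma

variable {x b : ℝ}

theorem analyticAt_log_Gamma (hx : 0 < x) :
    AnalyticAt ℝ (fun t => Real.log (Real.Gamma t)) x := by
  have hΓ : DifferentiableOn ℂ Complex.Gamma {s | 0 < s.re} := fun s hs =>
    (Complex.differentiableAt_Gamma s fun m h => by
      have hm : s.re ≤ 0 := by simp [h]
      exact hm.not_gt hs).differentiableWithinAt
  have hΓx : AnalyticAt ℂ Complex.Gamma x :=
    hΓ.analyticAt ((Complex.isOpen_re_gt 0).mem_nhds (by simpa using hx))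
  exact hΓx.re_ofReal.log (Real.Gamma_pos_of_pos hx)

theorem hasDerivAt_log_Gamma (hx : 0 < x) :
    HasDerivAt (fun t => Real.log (Real.Gamma t)) (digamma x) x :=
  (analyticAt_log_Gamma hx).differentiableAt.hasDerivAt

theorem log_Gamma_add_one (hx : 0 < x) :
    Real.log (Real.Gamma (x + 1)) = Real.log (Real.Gamma x) + Real.log x := by
  rw [Real.Gamma_add_one hx.ne', Real.log_mul hx.ne' (Real.Gamma_pos_of_pos hx).ne', add_comm]

theorem slope_log_Gamma_add_one (hx : 0 < x) :
    slope (Real.log ∘ Real.Gamma) x (x + 1) = Real.log x := by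
  simp only [slope_def_field, Function.comp_apply, log_Gamma_add_one hx, add_sub_cancel_left,
    div_one]

theorem digamma_add_one (hx : 0 < x) : digamma (x + 1) = digamma x + x⁻¹ := by
  have hshift : HasDerivAt (fun t => Real.log (Real.Gamma (t + 1))) (digamma (x + 1)) x :=
    (hasDerivAt_log_Gamma (by positivity)).comp_add_const x 1
  refine hshift.unique (((hasDerivAt_log_Gamma hx).add
    (Real.hasDerivAt_log hx.ne')).congr_of_eventuallyEq ?_)
  filter_upwards [lt_mem_nhds hx] with t ht using log_Gamma_add_one ht

theorem digamma_add_natCast (hx : 0 < x) (n : ℕ) :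
    digamma (x + n) = digamma x + ∑ k ∈ Finset.range n, (x + k)⁻¹ := by
  induction n with
  | zero => simp
  | succ n ih =>
    rw [Finset.sum_range_succ, Nat.cast_succ, ← add_assoc, digamma_add_one (by positivity), ih,
      add_assoc]

theorem digamma_le_log (hx : 0 < x) : digamma x ≤ Real.log x := by
  rw [← slope_log_Gamma_add_one hx]
  exact Real.convexOn_log_Gamma.le_slope_of_hasDerivAt hx (hx.trans (lt_add_one x))
    (lt_add_one x) (hasDerivAt_log_Gamma hx)

theorem log_sub_inv_le_digamma (hx : 0 < x) : Real.log x - x⁻¹ ≤ digamma x := by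
  have hx₁ : 0 < x + 1 := by positivity
  rw [sub_le_iff_le_add, ← digamma_add_one hx, ← slope_log_Gamma_add_one hx]
  exact Real.convexOn_log_Gamma.slope_le_of_hasDerivAt hx hx₁ (lt_add_one x)
    (hasDerivAt_log_Gamma hx₁)

theorem monotoneOn_digamma : MonotoneOn digamma (Ioi 0) :=
  Real.convexOn_log_Gamma.monotoneOn_deriv fun _ hx => (hasDerivAt_log_Gamma hx).differentiableAt

theorem digamma_add_sub_digamma_le (hx : 0 < x) (hb : 0 ≤ b) :
    digamma (x + b) - digamma x ≤ (b + 1) / x := by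
  have hxb : 0 < x + b := by positivity
  have hlog : Real.log (x + b) - Real.log x ≤ b / x := by
    rw [← Real.log_div hxb.ne' hx.ne']
    refine (Real.log_le_sub_one_of_pos (by positivity)).trans_eq ?_
    field_simp
    ring
  calc digamma (x + b) - digamma x
      ≤ Real.log (x + b) - (Real.log x - x⁻¹) :=
        sub_le_sub (digamma_le_log hxb) (log_sub_inv_le_digamma hx)
    _ ≤ b / x + x⁻¹ := by linarith
    _ = (b + 1) / x := by rw [add_div, one_div]

theorem tendsto_log_add_sub_sum_inv (hx : 0 < x) :
    Tendsto (fun n : ℕ => Real.log (x + n) - ∑ k ∈ Finset.range n, (x + k)⁻¹) atTop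
      (𝓝 (digamma x)) := by
  have hinv : Tendsto (fun n : ℕ => (x + n)⁻¹) atTop (𝓝 0) :=
    (tendsto_atTop_add_const_left _ x tendsto_natCast_atTop_atTop).inv_tendsto_atTop
  have herr : Tendsto (fun n : ℕ => Real.log (x + n) - digamma (x + n)) atTop (𝓝 0) :=
    squeeze_zero (fun n => sub_nonneg.2 (digamma_le_log (by positivity)))
      (fun n => sub_le_comm.1 (log_sub_inv_le_digamma (by positivity))) hinv
  rw [← add_zero (digamma x)]
  refine (herr.const_add (digamma x)).congr fun n => ?_
  rw [digamma_add_natCast hx]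
  ring

theorem concaveOn_log_add_sub_sum_inv (n : ℕ) :
    ConcaveOn ℝ (Ioi 0)
      fun x : ℝ => Real.log (x + n) - ∑ k ∈ Finset.range n, (x + k)⁻¹ := by
  have hsub (k : ℕ) : Ioi (0 : ℝ) ⊆ (fun x => (k : ℝ) + x) ⁻¹' Ioi 0 := fun x (hx : 0 < x) =>
    show 0 < k + x by positivity
  have hlog : ConcaveOn ℝ (Ioi 0) fun x : ℝ => Real.log (x + n) :=
    (strictConcaveOn_log_Ioi.concaveOn.translate_left n).subset (hsub n) (convex_Ioi 0)
  have hinv (k : ℕ) : ConvexOn ℝ (Ioi 0) fun x : ℝ => (x + k)⁻¹ := by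
    have h : ConvexOn ℝ (Ioi 0) fun x : ℝ => x⁻¹ := by simpa using convexOn_zpow (𝕜 := ℝ) (-1)
    exact (h.translate_left k).subset (hsub k) (convex_Ioi 0)
  exact hlog.sub (convexOn_finset_sum (convex_Ioi 0) fun k _ => hinv k)

theorem concaveOn_digamma : ConcaveOn ℝ (Ioi 0) digamma :=
  concaveOn_of_tendsto (.of_forall concaveOn_log_add_sub_sum_inv)
    fun _ => tendsto_log_add_sub_sum_inv

end Digamma

/-- The trigamma function `ψ₁ = ψ'` of a real variable. Being a `deriv`, it takes junk values where
`digamma` is not differentiable; `hasDerivAt_digamma` covers `(0, ∞)`. -/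
noncomputable def trigamma (x : ℝ) : ℝ := deriv digamma x

section Trigamma

variable {x b : ℝ}

theorem hasDerivAt_digamma (hx : 0 < x) : HasDerivAt digamma (trigamma x) x :=
  (analyticAt_log_Gamma hx).deriv.differentiableAt.hasDerivAt

theorem slope_digamma_add_one (hx : 0 < x) : slope digamma x (x + 1) = x⁻¹ := by
  rw [slope_def_field, digamma_add_one hx, add_sub_cancel_left, add_sub_cancel_left, div_one]

theorem trigamma_add_one (hx : 0 < x) : trigamma (x + 1) = trigamma x - (x ^ 2)⁻¹ := by
  have hshift : HasDerivAt (fun t => digamma (t + 1)) (trigamma (x + 1)) x :=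
    (hasDerivAt_digamma (by positivity)).comp_add_const x 1
  rw [sub_eq_add_neg]
  refine hshift.unique (((hasDerivAt_digamma hx).add
    (hasDerivAt_inv hx.ne')).congr_of_eventuallyEq ?_)
  filter_upwards [lt_mem_nhds hx] with t ht using digamma_add_one ht

theorem antitoneOn_trigamma : AntitoneOn trigamma (Ioi 0) :=
  concaveOn_digamma.antitoneOn_deriv fun _ hx => (hasDerivAt_digamma hx).differentiableAt

theorem inv_le_trigamma (hx : 0 < x) : x⁻¹ ≤ trigamma x := by
  rw [← slope_digamma_add_one hx]
  exact concaveOn_digamma.slope_le_of_hasDerivAt hx (hx.trans (lt_add_one x)) (lt_add_one x)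
    (hasDerivAt_digamma hx)

theorem trigamma_le_inv_add_inv_sq (hx : 0 < x) : trigamma x ≤ x⁻¹ + (x ^ 2)⁻¹ := by
  have hx₁ : 0 < x + 1 := by positivity
  rw [← sub_le_iff_le_add, ← trigamma_add_one hx, ← slope_digamma_add_one hx]
  exact concaveOn_digamma.le_slope_of_hasDerivAt hx hx₁ (lt_add_one x) (hasDerivAt_digamma hx₁)

theorem trigamma_sub_trigamma_add_nonneg (hx : 0 < x) (hb : 0 ≤ b) :
    0 ≤ trigamma x - trigamma (x + b) :=
  sub_nonneg.2 (antitoneOn_trigamma hx (add_pos_of_pos_of_nonneg hx hb) (le_add_of_nonneg_right hb))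

theorem trigamma_sub_trigamma_add_le (hx : 0 < x) (hb : 0 ≤ b) :
    trigamma x - trigamma (x + b) ≤ (b + 1) / x ^ 2 := by
  have hxb : 0 < x + b := by positivity
  calc trigamma x - trigamma (x + b)
      ≤ x⁻¹ + (x ^ 2)⁻¹ - (x + b)⁻¹ :=
        sub_le_sub (trigamma_le_inv_add_inv_sq hx) (inv_le_trigamma hxb)
    _ = b / (x * (x + b)) + (x ^ 2)⁻¹ := by
        field_simp
        ring
    _ ≤ b / (x * x) + (x ^ 2)⁻¹ := by
        gcongr
        exact le_add_of_nonneg_right hb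
    _ = (b + 1) / x ^ 2 := by rw [← sq, add_div, one_div]

theorem mul_trigamma_sub_trigamma_add_le {z : ℝ} (hx : 0 < x) (hxz : x ≤ z) (hb : 0 ≤ b) :
    x * (trigamma z - trigamma (z + b)) ≤ (b + 1) / x :=
  calc x * (trigamma z - trigamma (z + b))
      ≤ x * ((b + 1) / z ^ 2) := by
        gcongr
        exact trigamma_sub_trigamma_add_le (hx.trans_le hxz) hb
    _ ≤ x * ((b + 1) / x ^ 2) := by gcongr
    _ = (b + 1) / x := by field_simp

end Trigamma

section Score

variable {r a om ph ta lam y : ℝ}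

theorem bnbScore_le (hx : 0 < (a - 1) / r * lam) (ha : 0 ≤ a) (har : 0 ≤ a + r) (hy : 0 ≤ y) :
    bnbScore r a lam y ≤ a + 1 := by
  unfold bnbScore
  set x := (a - 1) / r * lam
  have hxy : 0 < x + y := by positivity
  have hmono : digamma (x + y) ≤ digamma (x + y + a + r) := by
    rw [add_assoc _ a r]
    exact monotoneOn_digamma hxy (add_pos_of_pos_of_nonneg hxy har) (le_add_of_nonneg_right har)
  calc x * (digamma (x + y) + digamma (x + a) - digamma (x + y + a + r) - digamma x)
      ≤ x * ((a + 1) / x) := by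
        gcongr
        linarith [digamma_add_sub_digamma_le hx ha]
    _ = a + 1 := mul_div_cancel₀ _ hx.ne'

theorem hasDerivAt_bnbScore (hy : 0 < (a - 1) / r * lam + y)
    (hyar : 0 < (a - 1) / r * lam + y + (a + r)) :
    HasDerivAt (bnbScore r a lam)
      ((a - 1) / r * lam *
        (trigamma ((a - 1) / r * lam + y) - trigamma ((a - 1) / r * lam + y + (a + r)))) y := by
  unfold bnbScore
  set x := (a - 1) / r * lam
  have hleft : HasDerivAt (fun t => digamma (x + t)) (trigamma (x + y)) y :=
    (hasDerivAt_digamma hy).comp_const_add x y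
  have hright : HasDerivAt (fun t => digamma (x + t + a + r)) (trigamma (x + y + (a + r))) y := by
    simp only [add_assoc _ a r]
    exact ((hasDerivAt_digamma hyar).comp_add_const (x + y) (a + r)).comp_const_add x y
  exact (((hleft.add_const _).sub hright).sub_const _).const_mul x

theorem hasDerivAt_gasUpdate {s' : ℝ} (hs : HasDerivAt (bnbScore r a lam) s' y) :
    HasDerivAt (fun y' => gasUpdate r a om ph ta y' lam)
      (gasUpdate r a om ph ta y lam * (ta * s')) y :=
  ((hs.const_mul ta).const_add (om + ph * Real.log lam)).exp

theorem add_mul_log_le_of_exp_div_le {c : ℝ} (hph : ph < 1)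
    (hlam : Real.exp ((om - c) / (1 - ph)) ≤ lam) : om + ph * Real.log lam ≤ Real.log lam + c := by
  have hlog := (Real.le_log_iff_exp_le ((Real.exp_pos _).trans_le hlam)).2 hlam
  rw [div_le_iff₀ (sub_pos.2 hph)] at hlog
  linarith

theorem gasUpdate_le (hx : 0 < (a - 1) / r * lam) (ha : 0 ≤ a) (har : 0 ≤ a + r)
    (hph : ph < 1) (hta : 0 ≤ ta)
    (hlam : Real.exp ((om - ta * (a + r + 1)) / (1 - ph)) ≤ lam) (hy : 0 ≤ y) :
    gasUpdate r a om ph ta y lam ≤ lam * Real.exp (ta * (2 * a + r + 2)) := by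
  have hlam₀ : 0 < lam := (Real.exp_pos _).trans_le hlam
  have hscore : ta * bnbScore r a lam y ≤ ta * (a + 1) :=
    mul_le_mul_of_nonneg_left (bnbScore_le hx ha har hy) hta
  calc gasUpdate r a om ph ta y lam
      ≤ Real.exp (Real.log lam + ta * (2 * a + r + 2)) :=
        Real.exp_le_exp.2 (by linarith [add_mul_log_le_of_exp_div_le hph hlam])
    _ = lam * Real.exp (ta * (2 * a + r + 2)) := by rw [Real.exp_add, Real.exp_log hlam₀]

end Score

theorem gas_deriv_y_bound_general (r a om ph ta : ℝ) (hγ : 0 < (a - 1) / r) (ha : 0 ≤ a)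
    (har : 0 ≤ a + r) (hph : ph < 1) (hta : 0 ≤ ta) :
    ∀ lam : ℝ, Real.exp ((om - ta * (a + r + 1)) / (1 - ph)) ≤ lam → ∀ y : ℝ, 0 ≤ y →
      |deriv (fun y' => gasUpdate r a om ph ta y' lam) y| ≤
        ta * ((a - 1) / r)⁻¹ * (a + r + 1) * Real.exp (ta * (2 * a + r + 2)) := by
  intro lam hlam y hy
  have hlam₀ : 0 < lam := (Real.exp_pos _).trans_le hlam
  have hx : 0 < (a - 1) / r * lam := mul_pos hγ hlam₀
  have hz : 0 < (a - 1) / r * lam + y := by positivity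
  have hderiv := (hasDerivAt_gasUpdate (om := om) (ph := ph) (ta := ta)
    (hasDerivAt_bnbScore hz (add_pos_of_pos_of_nonneg hz har))).deriv
  have hnonneg := mul_nonneg hx.le (trigamma_sub_trigamma_add_nonneg hz har)
  have hle := mul_trigamma_sub_trigamma_add_le hx (le_add_of_nonneg_right hy) har
  have hg : 0 ≤ gasUpdate r a om ph ta y lam := (Real.exp_pos _).le
  rw [hderiv, abs_of_nonneg (mul_nonneg hg (mul_nonneg hta hnonneg))]
  calc gasUpdate r a om ph ta y lam * (ta * _)
      ≤ lam * Real.exp (ta * (2 * a + r + 2)) * (ta * ((a + r + 1) / ((a - 1) / r * lam))) := by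
        gcongr
        exact gasUpdate_le hx ha har hph hta hlam hy
    _ = ta * ((a - 1) / r)⁻¹ * (a + r + 1) * Real.exp (ta * (2 * a + r + 2)) := by
        generalize (a - 1) / r = γ at hγ
        field_simp

theorem gas_deriv_y_bound (r a om ph ta : ℝ) (hr : 0 < r) (ha : 1 < a)
    (hph0 : 0 ≤ ph) (hph1 : ph < 1) (hta : 0 < ta) :
    ∀ lam : ℝ, Real.exp ((om - ta * (a + r + 1)) / (1 - ph)) ≤ lam → ∀ y : ℝ, 0 ≤ y →
      |deriv (fun y' => gasUpdate r a om ph ta y' lam) y| ≤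
        ta * ((a - 1) / r)⁻¹ * (a + r + 1) * Real.exp (ta * (2 * a + r + 2)) :=
  gas_deriv_y_bound_general r a om ph ta (div_pos (sub_pos.2 ha) hr) (by linarith) (by linarith)
    hph1 hta.le
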